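/- arXiv:math/0407379 — 4 statements merged into one kernel-verified Lean document; each statement's English description precedes it below -/
import Mathlib

section
/- The functions E₄* and E₆* on ℍ are algebraically independent over ℂ: there is no nonzero polynomial P ∈ ℂ[X, Y] such that P(E₄*(z), E₆*(z)) = 0 for all z ∈ ℍ. -/
/-- The Eisenstein series `E₄*(z) = ∑_{(m,n) ≠ (0,0)} (mz+n)^{−4}` on the upper half-plane.
(The term at `(m,n) = (0,0)` is `0^{-4} = 0` in `ℂ`, so it may be included harmlessly.) -/
noncomputable def E4star (z : ℂ) : ℂ := ∑' p : ℤ × ℤ, ((p.1 : ℂ) * z + (p.2 : ℂ)) ^ (-4 : ℤ)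

/-- The Eisenstein series `E₆*(z) = ∑_{(m,n) ≠ (0,0)} (mz+n)^{−6}` on the upper half-plane. -/
noncomputable def E6star (z : ℂ) : ℂ := ∑' p : ℤ × ℤ, ((p.1 : ℂ) * z + (p.2 : ℂ)) ^ (-6 : ℤ)

/-!
Let `P` be a polynomial relation between modular forms `f` and `g` of weights `k` and `l`. Moving
`z` by `SL(2, ℤ)` multiplies `(f z, g z)` by `(tᵏ, tˡ)`, where `t` runs through infinitely many
automorphy factors, so `P` vanishes on the whole weighted orbit `{(tᵏ f z, tˡ g z) | t ∈ ℂ}`. The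
orbits are separated by a weight zero quotient `f ^ m / g ^ n`; if that takes infinitely many
values, then `P` vanishes at infinitely many points of each line `y = c` with `c ≠ 0`, so `P = 0`.
For `E₄` and `E₆` the quotient `E₄ ^ 3 / E₆ ^ 2` tends to `1` at `i∞`, but never equals `1` because
`E₄ ^ 3 - E₆ ^ 2 = 1728 Δ` has no zeros.
-/

open Filter Topology UpperHalfPlane ModularForm
open scoped MatrixGroups

section Polynomial

variable {R : Type*} [CommRing R] {ι : Type*}

lemma eval_polynomial_eval_eq_zero_of_infinite [IsDomain R] {P : MvPolynomial ι R}
    {p : ι → Polynomial R}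
    (h : {t | MvPolynomial.eval (fun i ↦ (p i).eval t) P = 0}.Infinite) (t : R) :
    MvPolynomial.eval (fun i ↦ (p i).eval t) P = 0 := by
  have eval_aeval (s : R) :
      (MvPolynomial.aeval p P).eval s = MvPolynomial.eval (fun i ↦ (p i).eval s) P := by
    simpa [MvPolynomial.aeval_eq_eval] using
      MvPolynomial.comp_aeval_apply (f := p) (Polynomial.aeval s) P
  have aeval_eq_zero : MvPolynomial.aeval p P = 0 :=
    Polynomial.eq_zero_of_infinite_isRoot _ (h.mono fun s hs ↦ (eval_aeval s).trans hs)
  rw [← eval_aeval, aeval_eq_zero, Polynomial.eval_zero]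

lemma eval_pow_mul_eq_zero_of_infinite [IsDomain R] {P : MvPolynomial ι R} {k : ι → ℕ}
    {x : ι → R} (h : {t | MvPolynomial.eval (fun i ↦ t ^ k i * x i) P = 0}.Infinite) (t : R) :
    MvPolynomial.eval (fun i ↦ t ^ k i * x i) P = 0 := by
  have vanish := eval_polynomial_eval_eq_zero_of_infinite (P := P)
    (p := fun i ↦ Polynomial.X ^ k i * Polynomial.C (x i))
  simp only [Polynomial.eval_mul, Polynomial.eval_pow, Polynomial.eval_X,
    Polynomial.eval_C] at vanish
  exact vanish h t

lemma eq_zero_of_infinite_fibers [IsDomain R] {P : MvPolynomial (Fin 2) R} {s : Set R}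
    (hs : s.Infinite) (h : ∀ y ∈ s, {x | MvPolynomial.eval ![x, y] P = 0}.Infinite) : P = 0 := by
  have : Infinite R := hs.to_subtype.of_injective _ Subtype.val_injective
  have curve (x y : R) :
      (fun i ↦ (![Polynomial.X, Polynomial.C y] i).eval x) = ![x, y] := by
    ext i; fin_cases i <;> simp
  refine MvPolynomial.funext_set ![Set.univ, s]
    (Fin.forall_fin_two.2 ⟨Set.infinite_univ, hs⟩) fun v hv ↦ ?_
  have vanish := eval_polynomial_eval_eq_zero_of_infinite (P := P)
    (p := ![Polynomial.X, Polynomial.C (v 1)])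
    (by simpa only [curve] using h (v 1) (hv 1 trivial)) (v 0)
  have hv_eq : ![v 0, v 1] = v := by ext i; fin_cases i <;> rfl
  rwa [curve, hv_eq] at vanish

lemma eq_zero_of_infinite_weighted_orbits {K α : Type*} [Field K] [IsAlgClosed K] {k l m n : ℕ}
    (hl : l ≠ 0) (hn : n ≠ 0) (hkl : k * m = l * n) {u v : α → K}
    (hinf : (Set.range fun a ↦ u a ^ m / v a ^ n).Infinite) {P : MvPolynomial (Fin 2) K}
    (h : ∀ a t, MvPolynomial.eval ![t ^ k * u a, t ^ l * v a] P = 0) : P = 0 := by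
  refine eq_zero_of_infinite_fibers (Set.finite_singleton (0 : K)).infinite_compl fun y hy ↦ ?_
  refine Set.Infinite.of_image (fun x ↦ x ^ m / y ^ n)
    ((hinf.sdiff (Set.finite_singleton 0)).mono ?_)
  rintro _ ⟨⟨a, rfl⟩, ha⟩
  have hv : v a ≠ 0 := fun hv ↦ ha (by simp [hv, hn])
  obtain ⟨t, ht⟩ := IsAlgClosed.exists_pow_nat_eq (y / v a) (Nat.pos_of_ne_zero hl)
  have hty : t ^ l * v a = y := by rw [ht, div_mul_cancel₀ _ hv]
  have ht_pow : t ^ l ≠ 0 := ht ▸ div_ne_zero hy hv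
  refine ⟨t ^ k * u a, by simpa [hty] using h a t, ?_⟩
  calc (t ^ k * u a) ^ m / y ^ n
      = (t ^ l) ^ n * u a ^ m / ((t ^ l) ^ n * v a ^ n) := by
        rw [← hty, mul_pow, mul_pow, ← pow_mul, hkl, pow_mul]
    _ = u a ^ m / v a ^ n := mul_div_mul_left _ _ (pow_ne_zero n ht_pow)

lemma algebraicIndependent_iff_forall_eval {α : Type*} {x : ι → α → R} :
    AlgebraicIndependent R x ↔
      ∀ P : MvPolynomial ι R, (∀ a, MvPolynomial.eval (fun i ↦ x i a) P = 0) → P = 0 := by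
  have aeval_apply (P : MvPolynomial ι R) (a : α) :
      MvPolynomial.aeval x P a = MvPolynomial.eval (fun i ↦ x i a) P := by
    simpa [MvPolynomial.aeval_eq_eval] using
      MvPolynomial.comp_aeval_apply (f := x) (Pi.evalAlgHom R (fun _ : α ↦ R) a) P
  simp only [algebraicIndependent_iff, funext_iff, aeval_apply, Pi.zero_apply]

lemma algebraicIndependent_units_smul {A : Type*} [CommRing A] [Algebra R A] {x : ι → A}
    (hx : AlgebraicIndependent R x) (c : ι → Rˣ) : AlgebraicIndependent R fun i ↦ c i • x i := by
  rw [algebraicIndependent_iff] at hx ⊢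
  intro P hP
  have rescaled_eq_zero : MvPolynomial.aeval (fun i ↦ c i • MvPolynomial.X i) P = 0 :=
    hx _ (by simpa [MvPolynomial.aeval_bind₁, Units.smul_def] using hP)
  simpa [MvPolynomial.bind₁_bind₁, Units.smul_def, smul_smul] using
    congrArg (MvPolynomial.aeval fun i ↦ c⁻¹ i • (MvPolynomial.X i : MvPolynomial ι R))
      rescaled_eq_zero

end Polynomial

lemma infinite_range_of_tendsto_of_frequently_ne {α X : Type*} [TopologicalSpace X] [T1Space X]
    {l : Filter α} {f : α → X} {x : X} (hf : Tendsto f l (𝓝 x)) (hne : ∃ᶠ a in l, f a ≠ x) :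
    (Set.range f).Infinite := by
  intro hfin
  have hnhds : (Set.range f \ {x})ᶜ ∈ 𝓝 x :=
    hfin.sdiff.isClosed.isOpen_compl.mem_nhds (by simp)
  obtain ⟨a, hax, ha⟩ := (hne.and_eventually (hf.eventually hnhds)).exists
  exact ha ⟨Set.mem_range_self a, hax⟩

section SlashInvariant

variable {Γ : Subgroup (GL (Fin 2) ℝ)} [Γ.HasDetOne]

lemma eval_pow_mul_eq_zero_of_slash_eq {ι : Type*} {k : ι → ℕ} {f : ι → ℍ → ℂ}
    (hf : ∀ i, ∀ γ ∈ Γ, f i ∣[(k i : ℤ)] γ = f i) {P : MvPolynomial ι ℂ}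
    (hP : ∀ z, MvPolynomial.eval (fun i ↦ f i z) P = 0) {z : ℍ}
    (hΓ : ((denom · z) '' (Γ : Set (GL (Fin 2) ℝ))).Infinite) (t : ℂ) :
    MvPolynomial.eval (fun i ↦ t ^ k i * f i z) P = 0 := by
  refine eval_pow_mul_eq_zero_of_infinite (hΓ.mono ?_) t
  rintro _ ⟨γ, hγ, rfl⟩
  have automorphy (i : ι) : f i (γ • z) = denom γ z ^ k i * f i z :=
    mod_cast SlashInvariantForm.slash_action_eqn'' (⟨f i, hf i⟩ : SlashInvariantForm Γ (k i)) hγ z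
  have vanish := hP (γ • z)
  simp only [automorphy] at vanish
  exact vanish

theorem algebraicIndependent_of_infinite_range_quotient
    (hΓ : ∀ z : ℍ, ((denom · z) '' (Γ : Set (GL (Fin 2) ℝ))).Infinite)
    {k l m n : ℕ} (hl : l ≠ 0) (hn : n ≠ 0) (hkl : k * m = l * n) {F G : Type*}
    [FunLike F ℍ ℂ] [SlashInvariantFormClass F Γ k] [FunLike G ℍ ℂ] [SlashInvariantFormClass G Γ l]
    (f : F) (g : G) (hinf : (Set.range fun z ↦ f z ^ m / g z ^ n).Infinite) :
    AlgebraicIndependent ℂ ![⇑f, ⇑g] := by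
  refine algebraicIndependent_iff_forall_eval.2 fun P hP ↦
    eq_zero_of_infinite_weighted_orbits hl hn hkl hinf fun z t ↦ ?_
  have hslash : ∀ i, ∀ γ ∈ Γ, ![⇑f, ⇑g] i ∣[((![k, l] i : ℕ) : ℤ)] γ = ![⇑f, ⇑g] i :=
    Fin.forall_fin_two.2
      ⟨SlashInvariantForm.slash_action_eqn f, SlashInvariantForm.slash_action_eqn g⟩
  have orbit_point : ![t ^ k * f z, t ^ l * g z] = fun i ↦ t ^ ![k, l] i * ![⇑f, ⇑g] i z := by
    ext i; fin_cases i <;> rfl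
  exact orbit_point ▸ eval_pow_mul_eq_zero_of_slash_eq hslash hP (hΓ z) t

end SlashInvariant

lemma infinite_denom_image_SL (z : ℍ) :
    ((denom · z) '' (𝒮ℒ : Set (GL (Fin 2) ℝ))).Infinite := by
  refine (Set.infinite_range_of_injective
    ((add_right_injective (z : ℂ)).comp Int.cast_injective)).mono ?_
  rintro _ ⟨n, rfl⟩
  refine ⟨_, ⟨ModularGroup.S * ModularGroup.T ^ n, rfl⟩, ?_⟩
  simp [denom, ModularGroup.coe_S, ModularGroup.coe_T_zpow, -map_mul, -map_zpow]

lemma tendsto_atImInfty_qExpansion_coeff_zero {Γ : Subgroup (GL (Fin 2) ℝ)} {k : ℤ} {F : Type*}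
    [FunLike F ℍ ℂ] [ModularFormClass F Γ k] {h : ℝ} (hh : 0 < h) (hΓ : h ∈ Γ.strictPeriods)
    (f : F) : Tendsto f atImInfty (𝓝 ((qExpansion h f).coeff 0)) := by
  have hcusp : cuspFunction h f ∘ (fun τ : ℍ ↦ Function.Periodic.qParam h τ) = f :=
    funext fun τ ↦ SlashInvariantFormClass.eq_cuspFunction f τ hΓ hh.ne'
  simpa [hcusp, qExpansion_coeff] using
    (ModularFormClass.analyticAt_cuspFunction_zero f hh hΓ).continuousAt.tendsto.comp
      (qParam_tendsto_atImInfty hh)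

lemma tendsto_E_atImInfty {k : ℕ} (hk : 3 ≤ k) (hk_even : Even k) :
    Tendsto (E hk) atImInfty (𝓝 1) := by
  simpa only [EisensteinSeries.E_qExpansion_coeff_zero hk hk_even] using
    tendsto_atImInfty_qExpansion_coeff_zero one_pos one_mem_strictPeriods_SL (E hk)

lemma E₄_cube_ne_E₆_sq (z : ℍ) : E₄ z ^ 3 ≠ E₆ z ^ 2 := fun h ↦
  discriminant_ne_zero z (by rw [discriminant_eq_E₄_cube_sub_E₆_sq, h, sub_self, zero_div])

lemma infinite_range_E₄_cube_div_E₆_sq : (Set.range fun z ↦ E₄ z ^ 3 / E₆ z ^ 2).Infinite := by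
  have hlim : Tendsto (fun z ↦ E₄ z ^ 3 / E₆ z ^ 2) atImInfty (𝓝 1) := by
    have h4 : Tendsto E₄ atImInfty (𝓝 1) := tendsto_E_atImInfty _ (by decide)
    have h6 : Tendsto E₆ atImInfty (𝓝 1) := tendsto_E_atImInfty _ (by decide)
    simpa only [one_pow, div_one, Pi.div_def] using (h4.pow 3).div (h6.pow 2) (by simp)
  refine infinite_range_of_tendsto_of_frequently_ne hlim (Frequently.of_forall fun z hz ↦ ?_)
  exact E₄_cube_ne_E₆_sq z (eq_of_div_eq_one hz)

theorem algebraicIndependent_E₄_E₆ : AlgebraicIndependent ℂ ![⇑E₄, ⇑E₆] :=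
  algebraicIndependent_of_infinite_range_quotient (k := 4) (l := 6) (m := 3) (n := 2)
    infinite_denom_image_SL (by norm_num) (by norm_num) (by norm_num) E₄ E₆
    infinite_range_E₄_cube_div_E₆_sq

lemma tsum_zpow_neg_eq_riemannZeta_mul_E {k : ℕ} (hk : 3 ≤ k) (z : ℍ) :
    ∑' p : ℤ × ℤ, ((p.1 : ℂ) * z + p.2) ^ (-(k : ℤ)) = 2 * riemannZeta k * E hk z := by
  have hE : E hk z = 1 / 2 * eisensteinSeries (N := 1) 0 k z := rfl
  calc ∑' p : ℤ × ℤ, ((p.1 : ℂ) * z + p.2) ^ (-(k : ℤ))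
      = ∑' v : Fin 2 → ℤ, EisensteinSeries.eisSummand k v z := by
        simp [← (finTwoArrowEquiv ℤ).symm.tsum_eq, EisensteinSeries.eisSummand]
    _ = riemannZeta k * eisensteinSeries (N := 1) 0 k z :=
        tsum_eisSummand_eq_riemannZeta_mul_eisensteinSeries hk z
    _ = 2 * riemannZeta k * E hk z := by rw [hE]; ring

lemma two_mul_riemannZeta_natCast_ne_zero {k : ℕ} (hk : 1 < k) : 2 * riemannZeta k ≠ 0 :=
  mul_ne_zero two_ne_zero (riemannZeta_ne_zero_of_one_lt_re (by simpa using hk))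

theorem algebraicIndependent_E4star_E6star :
    AlgebraicIndependent ℂ ![fun z : ℍ ↦ E4star z, fun z : ℍ ↦ E6star z] := by
  let c : Fin 2 → ℂˣ :=
    ![.mk0 _ (two_mul_riemannZeta_natCast_ne_zero (k := 4) (by norm_num)),
      .mk0 _ (two_mul_riemannZeta_natCast_ne_zero (k := 6) (by norm_num))]
  convert algebraicIndependent_units_smul algebraicIndependent_E₄_E₆ c using 1
  ext i z
  fin_cases i
  · exact tsum_zpow_neg_eq_riemannZeta_mul_E (k := 4) (by norm_num) z
  · exact tsum_zpow_neg_eq_riemannZeta_mul_E (k := 6) (by norm_num) z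

/-- `E₄*` and `E₆*` are algebraically independent over `ℂ` as functions on the
upper half-plane. -/
theorem E4star_E6star_algebraically_independent :
    ¬ ∃ P : MvPolynomial (Fin 2) ℂ, P ≠ 0 ∧
      ∀ z : ℂ, 0 < z.im → MvPolynomial.eval ![E4star z, E6star z] P = 0 := by
  rintro ⟨P, hP, hvanish⟩
  refine hP (algebraicIndependent_iff_forall_eval.1 algebraicIndependent_E4star_E6star P fun z ↦ ?_)
  have values : (fun i ↦ ![fun z : ℍ ↦ E4star z, fun z : ℍ ↦ E6star z] i z)
      = ![E4star z, E6star z] := by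
    ext i; fin_cases i <;> rfl
  exact values ▸ hvanish z z.im_pos
end

section
/- Let K be a totally real number field with ring of integers 𝓞_K. Consider the action of the group SL₂(𝓞_K) on the projective line ℙ¹(K) (the projectivization of the K-vector space K²) in which a matrix acts on K² by matrix-vector multiplication (entries viewed in K). Then the set of orbits of this action is in bijection with the ideal class group of 𝓞_K. -/
open NumberField

/-!
The class attached to the point `[a : b]` is that of the fractional ideal `(a, b)`. Every ideal of a
Dedekind domain has two generators, so every class occurs. If `v` and `w` generate the same
fractional ideal `I`, write `1 ∈ I * I⁻¹` in terms of the coordinates of each vector to extend it to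
a matrix of determinant one over `K` with first column in `I` and second column in `I⁻¹`. With `M_v`
and `M_w` these matrices, `M_w * M_v⁻¹` sends `v` to `w` and has its entries in `I * I⁻¹ = R`.
-/

open scoped LinearAlgebra.Projectivization Matrix MatrixGroups nonZeroDivisors

theorem exists_specialLinearGroup_map_eq {n A B : Type*} [Fintype n] [DecidableEq n] [CommRing A]
    [CommRing B] {f : A →+* B} (hf : Function.Injective f) (M : Matrix.SpecialLinearGroup n B)
    (hM : ∀ i j, M i j ∈ f.range) :
    ∃ γ : Matrix.SpecialLinearGroup n A, Matrix.SpecialLinearGroup.map f γ = M := by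
  choose γ hγ using hM
  have hmap : f.mapMatrix (Matrix.of γ) = (M : Matrix n n B) := Matrix.ext hγ
  have hdet : (Matrix.of γ).det = 1 := hf <| by rw [RingHom.map_det, hmap, M.det_coe, map_one]
  exact ⟨⟨Matrix.of γ, hdet⟩, Subtype.ext hmap⟩

section FractionRing

variable (R : Type*) {K m n : Type*} [CommRing R] [Field K] [Algebra R K] [IsFractionRing R K]
  [Fintype m] [Fintype n]

/-- The fractional ideal generated by the coordinates of a vector, which for `v = ![a, b]` is the
ideal usually written `(a, b)`. -/
noncomputable def coordIdeal (v : n → K) : FractionalIdeal R⁰ K :=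
  FractionalIdeal.spanFinset R Finset.univ v

theorem coe_coordIdeal (v : n → K) :
    (coordIdeal R v : Submodule R K) = Submodule.span R (Set.range v) := by
  rw [coordIdeal, FractionalIdeal.spanFinset_coe, Finset.coe_univ, Set.image_univ]

variable {R}

theorem coordIdeal_le_iff {v : n → K} {I : FractionalIdeal R⁰ K} :
    coordIdeal R v ≤ I ↔ ∀ i, v i ∈ I := by
  rw [← FractionalIdeal.coe_le_coe, coe_coordIdeal, Submodule.span_le, Set.range_subset_iff]
  rfl

theorem apply_mem_coordIdeal (v : n → K) (i : n) : v i ∈ coordIdeal R v :=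
  coordIdeal_le_iff.mp le_rfl i

theorem coordIdeal_ne_zero {v : n → K} (hv : v ≠ 0) : coordIdeal R v ≠ 0 := by
  obtain ⟨i, hi⟩ := Function.ne_iff.mp hv
  exact FractionalIdeal.spanFinset_ne_zero.mpr ⟨i, Finset.mem_univ i, hi⟩

theorem coordIdeal_smul (t : K) (v : n → K) :
    coordIdeal R (t • v) = FractionalIdeal.spanSingleton R⁰ t * coordIdeal R v := by
  rw [← FractionalIdeal.coeToSubmodule_inj, FractionalIdeal.coe_mul,
    FractionalIdeal.coe_spanSingleton, coe_coordIdeal, coe_coordIdeal, Submodule.span_mul_span,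
    Set.singleton_mul, ← Set.range_comp]
  rfl

theorem coordIdeal_pair (a b : K) :
    coordIdeal R ![a, b] =
      FractionalIdeal.spanSingleton R⁰ a + FractionalIdeal.spanSingleton R⁰ b := by
  rw [← FractionalIdeal.coeToSubmodule_inj, FractionalIdeal.coe_add,
    FractionalIdeal.coe_spanSingleton, FractionalIdeal.coe_spanSingleton, coe_coordIdeal,
    Matrix.range_cons_cons_empty, Submodule.span_insert, Submodule.add_eq_sup]

theorem coordIdeal_mulVec_le (A : Matrix m n R) (v : n → K) :
    coordIdeal R (A.map (algebraMap R K) *ᵥ v) ≤ coordIdeal R v := by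
  refine coordIdeal_le_iff.mpr fun i ↦ ?_
  have hsum : (A.map (algebraMap R K) *ᵥ v) i = ∑ j, A i j • v j := by
    simp only [Matrix.mulVec, dotProduct, Matrix.map_apply, Algebra.smul_def]
  rw [hsum, ← FractionalIdeal.mem_coe]
  exact Submodule.sum_mem _ fun j _ ↦ Submodule.smul_mem _ _ (apply_mem_coordIdeal v j)

theorem coordIdeal_mulVec [DecidableEq n] (γ : Matrix.SpecialLinearGroup n R) (v : n → K) :
    coordIdeal R ((γ : Matrix n n R).map (algebraMap R K) *ᵥ v) = coordIdeal R v := by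
  refine le_antisymm (coordIdeal_mulVec_le _ v) ?_
  have hinv : ((γ⁻¹ : Matrix.SpecialLinearGroup n R) : Matrix n n R).map (algebraMap R K) *ᵥ
      ((γ : Matrix n n R).map (algebraMap R K) *ᵥ v) = v := by
    rw [Matrix.mulVec_mulVec, ← Matrix.map_mul, ← Matrix.SpecialLinearGroup.coe_mul,
      inv_mul_cancel, Matrix.SpecialLinearGroup.coe_one,
      Matrix.map_one _ (map_zero _) (map_one _), Matrix.one_mulVec]
  calc coordIdeal R v = coordIdeal R _ := congrArg (coordIdeal R) hinv.symm
    _ ≤ coordIdeal R ((γ : Matrix n n R).map (algebraMap R K) *ᵥ v) := coordIdeal_mulVec_le _ _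

theorem exists_dotProduct_eq_of_mem_coordIdeal_mul {v : n → K} {J : FractionalIdeal R⁰ K} {x : K}
    (hx : x ∈ coordIdeal R v * J) : ∃ p : n → K, (∀ i, p i ∈ J) ∧ v ⬝ᵥ p = x := by
  refine FractionalIdeal.mul_induction_on hx (fun a ha b hb ↦ ?_) ?_
  · rw [← FractionalIdeal.mem_coe, coe_coordIdeal, Submodule.mem_span_range_iff_exists_fun] at ha
    obtain ⟨c, rfl⟩ := ha
    refine ⟨fun i ↦ c i • b, fun i ↦ Submodule.smul_mem (J : Submodule R K) (c i) hb, ?_⟩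
    simp only [dotProduct, Finset.sum_mul, mul_smul_comm, smul_mul_assoc]
  · rintro _ _ ⟨p, hp, rfl⟩ ⟨q, hq, rfl⟩
    exact ⟨p + q, fun i ↦ Submodule.add_mem (J : Submodule R K) (hp i) (hq i), dotProduct_add v p q⟩

theorem classGroup_mk_eq_mk_iff [IsDomain R] {I J : (FractionalIdeal R⁰ K)ˣ} :
    ClassGroup.mk K I = ClassGroup.mk K J ↔ ∃ t : Kˣ, toPrincipalIdeal R K t * I = J := by
  have hequiv (L : (FractionalIdeal R⁰ K)ˣ) :
      ClassGroup.equiv K (ClassGroup.mk K L) = QuotientGroup.mk' _ L := by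
    rw [ClassGroup.equiv_mk, FractionalIdeal.canonicalEquiv_self]
    rfl
  rw [← (ClassGroup.equiv K).injective.eq_iff, hequiv, hequiv, QuotientGroup.mk'_eq_mk']
  simp only [MonoidHom.mem_range, exists_exists_eq_and, mul_comm]

end FractionRing

section Dedekind

variable (R : Type*) {K n : Type*} [CommRing R] [IsDedekindDomain R] [Field K] [Algebra R K]
  [IsFractionRing R K] [Fintype n]

theorem exists_coordIdeal_eq {I : FractionalIdeal R⁰ K} (hI : I ≠ 0) :
    ∃ v : Fin 2 → K, v ≠ 0 ∧ coordIdeal R v = I := by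
  obtain ⟨a, haI, ha⟩ := Submodule.exists_mem_ne_zero_of_ne_bot
    (mt FractionalIdeal.coeToSubmodule_eq_bot.mp hI)
  obtain ⟨b, hb⟩ := IsDedekindDomain.exists_add_spanSingleton_mul_eq
    (FractionalIdeal.spanSingleton_le_iff_mem.mpr haI)
    (FractionalIdeal.spanSingleton_ne_zero_iff.mpr ha) one_ne_zero
  exact ⟨![a, b], fun h ↦ ha (congrFun h 0), by rw [coordIdeal_pair, ← hb, mul_one]⟩

theorem exists_specialLinearGroup_col_mem_inv {v : Fin 2 → K} (hv : v ≠ 0) :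
    ∃ M : SL(2, K), M.1.col 0 = v ∧ ∀ i, M i 1 ∈ (coordIdeal R v)⁻¹ := by
  have hone : (1 : K) ∈ coordIdeal R v * (coordIdeal R v)⁻¹ := by
    rw [mul_inv_cancel₀ (coordIdeal_ne_zero hv)]
    exact FractionalIdeal.one_mem_one _
  obtain ⟨p, hp, hvp⟩ := exists_dotProduct_eq_of_mem_coordIdeal_mul hone
  rw [dotProduct, Fin.sum_univ_two] at hvp
  refine ⟨⟨!![v 0, -p 1; v 1, p 0], ?_⟩, ?_, ?_⟩
  · rw [Matrix.det_fin_two_of]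
    linear_combination hvp
  · ext i
    fin_cases i <;> rfl
  · exact Fin.forall_fin_two.mpr ⟨Submodule.neg_mem ((coordIdeal R v)⁻¹).1 (hp 1), hp 0⟩

variable {R} in
theorem mul_inv_apply_mem_range {I : FractionalIdeal R⁰ K} (hI : I ≠ 0) {M N : SL(2, K)}
    (hM₀ : ∀ i, M i 0 ∈ I) (hM₁ : ∀ i, M i 1 ∈ I⁻¹) (hN₀ : ∀ i, N i 0 ∈ I)
    (hN₁ : ∀ i, N i 1 ∈ I⁻¹) (i j : Fin 2) : (N * M⁻¹) i j ∈ (algebraMap R K).range := by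
  have hmul {a b : K} (ha : a ∈ I) (hb : b ∈ I⁻¹) : a * b ∈ (algebraMap R K).range := by
    have hab := FractionalIdeal.mul_mem_mul ha hb
    rwa [mul_inv_cancel₀ hI, FractionalIdeal.mem_one_iff] at hab
  have hrow₀ : ∀ j, M⁻¹ 0 j ∈ I⁻¹ := by
    rw [Matrix.SpecialLinearGroup.SL2_inv_expl]
    exact Fin.forall_fin_two.mpr ⟨hM₁ 1, Submodule.neg_mem (I⁻¹).1 (hM₁ 0)⟩
  have hrow₁ : ∀ j, M⁻¹ 1 j ∈ I := by
    rw [Matrix.SpecialLinearGroup.SL2_inv_expl]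
    exact Fin.forall_fin_two.mpr ⟨Submodule.neg_mem I.1 (hM₀ 1), hM₀ 0⟩
  have hentry : (N * M⁻¹) i j = N i 0 * M⁻¹ 0 j + M⁻¹ 1 j * N i 1 := by
    rw [Matrix.SpecialLinearGroup.coe_mul, Matrix.mul_apply, Fin.sum_univ_two, mul_comm (N i 1)]
  exact hentry ▸ add_mem (hmul (hN₀ i) (hrow₀ j)) (hmul (hrow₁ j) (hN₁ i))

theorem exists_mulVec_eq_of_coordIdeal_eq {v w : Fin 2 → K} (hv : v ≠ 0) (hw : w ≠ 0)
    (h : coordIdeal R v = coordIdeal R w) :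
    ∃ γ : SL(2, R), (γ : Matrix (Fin 2) (Fin 2) R).map (algebraMap R K) *ᵥ v = w := by
  obtain ⟨M, rfl, hM⟩ := exists_specialLinearGroup_col_mem_inv R hv
  obtain ⟨N, rfl, hN⟩ := exists_specialLinearGroup_col_mem_inv R hw
  obtain ⟨γ, hγ⟩ := exists_specialLinearGroup_map_eq (IsFractionRing.injective R K) (N * M⁻¹) <|
    mul_inv_apply_mem_range (coordIdeal_ne_zero hv) (apply_mem_coordIdeal _) hM
      (h ▸ apply_mem_coordIdeal _) (h ▸ hN)
  have hmap : (γ : Matrix (Fin 2) (Fin 2) R).map (algebraMap R K) = N.1 * (M⁻¹).1 :=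
    congrArg Subtype.val hγ
  refine ⟨γ, ?_⟩
  rw [hmap, ← Matrix.mulVec_single_one, ← Matrix.mulVec_single_one, Matrix.mulVec_mulVec,
    mul_assoc, ← Matrix.SpecialLinearGroup.coe_mul, inv_mul_cancel,
    Matrix.SpecialLinearGroup.coe_one, mul_one]

/-- The ideal class of the fractional ideal generated by the coordinates of a nonzero vector. -/
noncomputable def coordClass (v : {v : n → K // v ≠ 0}) : ClassGroup R :=
  ClassGroup.mk K (Units.mk0 (coordIdeal R v.1) (coordIdeal_ne_zero v.2))

variable {R} in
theorem coordClass_eq_iff {v w : {v : n → K // v ≠ 0}} :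
    coordClass R v = coordClass R w ↔ ∃ t : Kˣ, coordIdeal R (t • v.1) = coordIdeal R w.1 := by
  simp only [coordClass, classGroup_mk_eq_mk_iff, Units.ext_iff, Units.val_mul, Units.val_mk0,
    coe_toPrincipalIdeal, Units.smul_def, coordIdeal_smul]

/-- The ideal class of a point of projective space, namely `coordClass` of any of its
representatives. -/
noncomputable def pointClass : ℙ K (n → K) → ClassGroup R :=
  Projectivization.lift (coordClass R) fun v w t h ↦ by
    have ht : t ≠ 0 := left_ne_zero_of_smul (h ▸ v.2)
    exact (coordClass_eq_iff.mpr ⟨Units.mk0 t ht, congrArg (coordIdeal R) h.symm⟩).symm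

theorem pointClass_surjective : Function.Surjective (pointClass R : ℙ K (Fin 2 → K) → _) := by
  intro c
  refine ClassGroup.induction K (fun I ↦ ?_) c
  obtain ⟨v, hv, hvI⟩ := exists_coordIdeal_eq R I.ne_zero
  exact ⟨.mk K v hv, congrArg (ClassGroup.mk K) (Units.ext hvI)⟩

end Dedekind

section CuspRel

variable (R K : Type*) [CommRing R] [Field K] [Algebra R K]

/-- Two points of `ℙ¹(K)` are related when an element of `SL₂(R)` carries the first to the second;
its classes are the cusps of `SL₂(R)`. The image of a representative is required to be nonzero, as
`Projectivization.mk` takes a proof of this. -/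
def CuspRel (x y : ℙ K (Fin 2 → K)) : Prop :=
  ∃ γ : SL(2, R), ∃ (v : Fin 2 → K) (hv : v ≠ 0)
    (hw : (γ : Matrix (Fin 2) (Fin 2) R).map (algebraMap R K) *ᵥ v ≠ 0),
    Projectivization.mk K v hv = x ∧
      Projectivization.mk K ((γ : Matrix (Fin 2) (Fin 2) R).map (algebraMap R K) *ᵥ v) hw = y

variable [IsDedekindDomain R] [IsFractionRing R K]

variable {R K} in
theorem pointClass_eq_iff_cuspRel {x y : ℙ K (Fin 2 → K)} :
    pointClass R x = pointClass R y ↔ CuspRel R K x y := by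
  constructor
  · induction x with | h v hv =>
    induction y with | h w hw =>
    intro h
    obtain ⟨t, ht⟩ := coordClass_eq_iff.mp h
    have htv : t • v ≠ 0 := (smul_ne_zero_iff_ne t).mpr hv
    obtain ⟨γ, rfl⟩ := exists_mulVec_eq_of_coordIdeal_eq R htv hw ht
    exact ⟨γ, t • v, htv, hw, (Projectivization.mk_eq_mk_iff K _ _ _ _).mpr ⟨t, rfl⟩, rfl⟩
  · rintro ⟨γ, v, hv, hw, rfl, rfl⟩
    exact coordClass_eq_iff.mpr ⟨1, by rw [one_smul, coordIdeal_mulVec]⟩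

theorem cusps_biject_with_class_group_general : Nonempty (Quot (CuspRel R K) ≃ ClassGroup R) := by
  let cuspClass : Quot (CuspRel R K) → ClassGroup R :=
    Quot.lift (pointClass R) fun _ _ ↦ pointClass_eq_iff_cuspRel.mpr
  have hinj : Function.Injective cuspClass := by
    rintro ⟨x⟩ ⟨y⟩ h
    exact Quot.sound (pointClass_eq_iff_cuspRel.mp h)
  have hsurj : Function.Surjective cuspClass :=
    (Quot.surjective_lift _).mpr (pointClass_surjective R)
  exact ⟨Equiv.ofBijective cuspClass ⟨hinj, hsurj⟩⟩

end CuspRel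

/-- For a totally real number field `K` (every complex embedding has real image), the set of
orbits of the action of `SL₂(𝓞_K)` on the projective line `ℙ¹(K)` (acting through
matrix-vector multiplication on `K²`) is in bijection with the ideal class group of `𝓞_K`. -/
theorem cusps_biject_with_class_group (K : Type*) [Field K] [NumberField K]
    (htotallyReal : ∀ φ : K →+* ℂ, ∀ x : K, (φ x).im = 0) :
    Nonempty
      (Quot (fun x y : Projectivization K (Fin 2 → K) =>
          ∃ γ : Matrix.SpecialLinearGroup (Fin 2) (RingOfIntegers K),
            ∃ (v : Fin 2 → K) (hv : v ≠ 0)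
              (hw : Matrix.mulVec
                  ((γ : Matrix (Fin 2) (Fin 2) (RingOfIntegers K)).map
                    (algebraMap (RingOfIntegers K) K)) v ≠ 0),
              Projectivization.mk K v hv = x ∧
              Projectivization.mk K
                (Matrix.mulVec
                  ((γ : Matrix (Fin 2) (Fin 2) (RingOfIntegers K)).map
                    (algebraMap (RingOfIntegers K) K)) v) hw = y)
        ≃ ClassGroup (RingOfIntegers K)) :=
  cusps_biject_with_class_group_general (𝓞 K) K
end

section
/- Let U be a 4×4 integer matrix with U·J·Uᵀ = J, where J = [[0, I₂],[−I₂, 0]] (i.e. U ∈ Sp₄(ℤ)), and write U in 2×2 blocks as U = [[A,B],[C,D]]. Define α_U : (ℤ/2ℤ)² × (ℤ/2ℤ)² → (ℤ/2ℤ)² × (ℤ/2ℤ)² by α_U(r, s) = (Aᵀ·r + Cᵀ·s + d(Aᵀ·C), Bᵀ·r + Dᵀ·s + d(Bᵀ·D)), where all matrix entries are reduced modulo 2 and d(M) ∈ (ℤ/2ℤ)² denotes the vector of diagonal entries of a 2×2 matrix M. Then α_U is a bijection of (ℤ/2ℤ)² × (ℤ/2ℤ)², and it maps the set of even characteristics {(r,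 s) : r₁·s₁ + r₂·s₂ = 0 in ℤ/2ℤ} bijectively onto itself. -/
open Matrix
/-- The affine action of a symplectic matrix `U = [[A,B],[C,D]] ∈ Sp₄(ℤ)` on theta
characteristics `(r, s) ∈ (ℤ/2)² × (ℤ/2)²`:
`α_U(r, s) = (Aᵀr + Cᵀs + d(AᵀC), Bᵀr + Dᵀs + d(BᵀD))`, entries reduced mod 2, where
`d(M)` is the vector of diagonal entries of `M`. -/
def alphaMap (A B C D : Matrix (Fin 2) (Fin 2) ℤ) :
    (Fin 2 → ZMod 2) × (Fin 2 → ZMod 2) → (Fin 2 → ZMod 2) × (Fin 2 → ZMod 2) :=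
  fun p =>
    ((A.map (Int.cast : ℤ → ZMod 2))ᵀ.mulVec p.1 +
        (C.map (Int.cast : ℤ → ZMod 2))ᵀ.mulVec p.2 +
        fun i => ((A.map (Int.cast : ℤ → ZMod 2))ᵀ * C.map (Int.cast : ℤ → ZMod 2)) i i,
      (B.map (Int.cast : ℤ → ZMod 2))ᵀ.mulVec p.1 +
        (D.map (Int.cast : ℤ → ZMod 2))ᵀ.mulVec p.2 +
        fun i => ((B.map (Int.cast : ℤ → ZMod 2))ᵀ * D.map (Int.cast : ℤ → ZMod 2)) i i)

/-- The set of even theta characteristics: `r₁s₁ + r₂s₂ = 0` in `ℤ/2`. -/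
def evenChar : Set ((Fin 2 → ZMod 2) × (Fin 2 → ZMod 2)) :=
  {p | p.1 0 * p.2 0 + p.1 1 * p.2 1 = 0}

/-!
Let `q(r, s) = r · s` and let `α v = v U + δ` be the action. If `V` is symplectic over `ℤ/2`, then
`v ↦ q(v V) - q(v)` is the restriction of a symmetric bilinear form to the diagonal, hence linear
in `v`, since cross terms cancel and `x² = x`. For `V = U⁻¹` this linear form is the symplectic
pairing with `δ`, and evaluating at `v U` gives `q(α v) = q(v) + q(δ)`.

The constant `q(δ)` vanishes because the Gauss sum `∑ᵥ (-1) ^ q(v)`, which equals `2 ^ g` in genus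
`g`, is invariant under the bijection `α` but is also multiplied by `(-1) ^ q(δ)`.
-/

section GaussSum

theorem addChar_sum_eq_prod {ι A M : Type*} [AddCommMonoid A] [CommMonoid M] (ψ : AddChar A M)
    (f : ι → A) (s : Finset ι) : ψ (∑ i ∈ s, f i) = ∏ i ∈ s, ψ (f i) :=
  map_prod ψ.toMonoidHom (fun i ↦ Multiplicative.ofAdd (f i)) s

variable {l : Type*} [Fintype l]

theorem sum_addChar_dotProduct [DecidableEq l] {R R' : Type*} [CommRing R] [Fintype R]
    [CommRing R'] [IsDomain R'] {ψ : AddChar R R'} (hψ : ψ.IsPrimitive) :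
    ∑ p : (l → R) × (l → R), ψ (p.1 ⬝ᵥ p.2) = (Fintype.card R : R') ^ Fintype.card l := by
  classical
  calc ∑ p : (l → R) × (l → R), ψ (p.1 ⬝ᵥ p.2)
      = ∑ s : l → R, ∑ r : l → R, ∏ i, ψ (r i * s i) := by
        simp only [Fintype.sum_prod_type_right, dotProduct, addChar_sum_eq_prod ψ]
    _ = ∏ _i : l, ∑ y : R, ∑ x : R, ψ (x * y) := by
        simp only [Fintype.prod_sum]
    _ = (Fintype.card R : R') ^ Fintype.card l := by
        simp [AddChar.sum_mulShift _ hψ]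

theorem eq_zero_of_dotProduct_comp_eq_add {N : ℕ} [NeZero N]
    {e : (l → ZMod N) × (l → ZMod N) → (l → ZMod N) × (l → ZMod N)} (he : Function.Bijective e)
    {c : ZMod N} (h : ∀ p, (e p).1 ⬝ᵥ (e p).2 = p.1 ⬝ᵥ p.2 + c) : c = 0 := by
  classical
  let ψ : AddChar (ZMod N) ℂ := ZMod.stdAddChar
  let gaussSum : ℂ := ∑ p : (l → ZMod N) × (l → ZMod N), ψ (p.1 ⬝ᵥ p.2)
  have gaussSum_ne_zero : gaussSum ≠ 0 := by
    simp only [gaussSum, sum_addChar_dotProduct (ZMod.isPrimitive_stdAddChar N), ψ]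
    simp [NeZero.ne N]
  have gaussSum_mul : gaussSum * ψ c = gaussSum := by
    simp only [gaussSum, Finset.sum_mul, ← AddChar.map_add_eq_mul, ← h]
    exact he.sum_comp fun p ↦ ψ (p.1 ⬝ᵥ p.2)
  have hc : ψ c = ψ 0 := by
    rw [AddChar.map_zero_eq_one, (mul_eq_left₀ gaussSum_ne_zero).1 gaussSum_mul]
  exact ZMod.injective_stdAddChar hc

end GaussSum

theorem dotProduct_mulVec_self_of_isSymm {l R : Type*} [Fintype l] [CommRing R] [CharP R 2]
    {S : Matrix l l R} (hS : S.IsSymm) (x : l → R) :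
    x ⬝ᵥ S *ᵥ x = ∑ i, S i i * x i ^ 2 := by
  classical
  have hcomm (x y : l → R) : y ⬝ᵥ S *ᵥ x = x ⬝ᵥ S *ᵥ y := by
    rw [dotProduct_comm, dotProduct_mulVec, ← mulVec_transpose, hS.eq]
  let f : (l → R) →+ R := AddMonoidHom.mk' (fun x ↦ x ⬝ᵥ S *ᵥ x) fun x y ↦ by
    simp only [mulVec_add, add_dotProduct, dotProduct_add, hcomm x y]
    linear_combination CharTwo.add_self_eq_zero (x ⬝ᵥ S *ᵥ y)
  calc f x = ∑ i, f (Pi.single i (x i)) := by rw [← map_sum, Finset.univ_sum_single]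
    _ = ∑ i, S i i * x i ^ 2 := by
      refine Finset.sum_congr rfl fun i _ ↦ ?_
      simp only [AddMonoidHom.mk'_apply, mulVec_single, op_smul_eq_smul, dotProduct_smul,
        single_dotProduct, col_apply, smul_eq_mul, f]
      ring

section BlockVecMul

variable {l m R : Type*} [Fintype l] [CommSemiring R]

/-- The product `(r, s) U` of a row vector with the block matrix `U = [[A, B], [C, D]]`, on pairs
of vectors rather than on vectors indexed by `l ⊕ l`. It is the linear part of the action of `U`
on characteristics. -/
def blockVecMul (A B C D : Matrix l m R) (p : (l → R) × (l → R)) : (m → R) × (m → R) :=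
  (p.1 ᵥ* A + p.2 ᵥ* C, p.1 ᵥ* B + p.2 ᵥ* D)

theorem dotProduct_blockVecMul [Fintype m] (A B C D : Matrix l m R) (p : (l → R) × (l → R)) :
    (blockVecMul A B C D p).1 ⬝ᵥ (blockVecMul A B C D p).2 =
      p.1 ⬝ᵥ (A * Dᵀ + B * Cᵀ) *ᵥ p.2 + p.1 ⬝ᵥ (A * Bᵀ) *ᵥ p.1 + p.2 ⬝ᵥ (C * Dᵀ) *ᵥ p.2 := by
  have vecMul_dotProduct_vecMul (x y : l → R) (M N : Matrix l m R) :
      x ᵥ* M ⬝ᵥ y ᵥ* N = x ⬝ᵥ (M * Nᵀ) *ᵥ y := by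
    rw [← mulVec_mulVec, mulVec_transpose, dotProduct_mulVec]
  have hCB : p.2 ᵥ* C ⬝ᵥ p.1 ᵥ* B = p.1 ⬝ᵥ (B * Cᵀ) *ᵥ p.2 := by
    rw [dotProduct_comm, vecMul_dotProduct_vecMul]
  simp only [blockVecMul, add_dotProduct, dotProduct_add, hCB, vecMul_dotProduct_vecMul,
    add_mulVec]
  ring

end BlockVecMul

section SymplecticBlocks

variable {l R : Type*} [Fintype l] [DecidableEq l] [CommRing R] {A B C D : Matrix l l R}

theorem mem_symplecticGroup_iff_mul_neg_J {U : Matrix (l ⊕ l) (l ⊕ l) R} :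
    U ∈ symplecticGroup l R ↔ U * fromBlocks 0 1 (-1) 0 * Uᵀ = fromBlocks 0 1 (-1) 0 := by
  have hJ : fromBlocks 0 1 (-1) 0 = -J l R := by simp [J, fromBlocks_neg]
  rw [hJ, SymplecticGroup.mem_iff, Matrix.mul_neg, Matrix.neg_mul, neg_inj]

theorem fromBlocks_map_mem_symplecticGroup {S : Type*} [CommRing S] (f : R →+* S)
    (h : fromBlocks A B C D ∈ symplecticGroup l R) :
    fromBlocks (A.map f) (B.map f) (C.map f) (D.map f) ∈ symplecticGroup l S := by
  simpa only [fromBlocks_map] using SymplecticGroup.map_mem h f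

theorem fromBlocks_mem_symplecticGroup_iff_mul_transpose :
    fromBlocks A B C D ∈ symplecticGroup l R ↔
      A * Bᵀ = B * Aᵀ ∧ C * Dᵀ = D * Cᵀ ∧ A * Dᵀ - B * Cᵀ = 1 := by
  rw [← SymplecticGroup.transpose_mem_iff, fromBlocks_transpose,
    SymplecticGroup.fromBlocks_mem_iff]
  simp only [transpose_transpose]

theorem fromBlocks_symplectic_inv_mem (h : fromBlocks A B C D ∈ symplecticGroup l R) :
    fromBlocks Dᵀ (-Bᵀ) (-Cᵀ) Aᵀ ∈ symplecticGroup l R := by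
  obtain ⟨hAB, hCD, hAD⟩ := fromBlocks_mem_symplecticGroup_iff_mul_transpose.1 h
  have hDA : D * Aᵀ - C * Bᵀ = 1 := by simpa using congrArg transpose hAD
  simp [SymplecticGroup.fromBlocks_mem_iff, hAB, hCD, hDA]

theorem blockVecMul_symplectic_inv (h : fromBlocks A B C D ∈ symplecticGroup l R)
    (p : (l → R) × (l → R)) :
    blockVecMul Dᵀ (-Bᵀ) (-Cᵀ) Aᵀ (blockVecMul A B C D p) = p := by
  obtain ⟨hAB, hCD, hAD⟩ := fromBlocks_mem_symplecticGroup_iff_mul_transpose.1 h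
  have hDA : D * Aᵀ - C * Bᵀ = 1 := by simpa using congrArg transpose hAD
  ext1
  · calc _ = p.1 ᵥ* (A * Dᵀ - B * Cᵀ) + p.2 ᵥ* (C * Dᵀ - D * Cᵀ) := by
          simp only [blockVecMul, add_vecMul, vecMul_vecMul, vecMul_neg, vecMul_sub]; abel
      _ = p.1 := by simp [hAD, hCD]
  · calc _ = p.1 ᵥ* (B * Aᵀ - A * Bᵀ) + p.2 ᵥ* (D * Aᵀ - C * Bᵀ) := by
          simp only [blockVecMul, add_vecMul, vecMul_vecMul, vecMul_neg, vecMul_sub]; abel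
      _ = p.2 := by simp [hDA, hAB]

theorem dotProduct_blockVecMul_of_mem_symplecticGroup [CharP R 2]
    (h : fromBlocks A B C D ∈ symplecticGroup l R) (p : (l → R) × (l → R)) :
    (blockVecMul A B C D p).1 ⬝ᵥ (blockVecMul A B C D p).2 =
      p.1 ⬝ᵥ p.2 + ∑ i, (A * Bᵀ) i i * p.1 i ^ 2 + ∑ i, (C * Dᵀ) i i * p.2 i ^ 2 := by
  obtain ⟨hAB, hCD, hAD⟩ := fromBlocks_mem_symplecticGroup_iff_mul_transpose.1 h
  have hAD' : A * Dᵀ + B * Cᵀ = 1 := by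
    rw [← hAD]
    ext i j
    simp [CharTwo.sub_eq_add]
  have hAB_symm : (A * Bᵀ).IsSymm := by simp [Matrix.IsSymm, hAB]
  have hCD_symm : (C * Dᵀ).IsSymm := by simp [Matrix.IsSymm, hCD]
  rw [dotProduct_blockVecMul, hAD', one_mulVec, dotProduct_mulVec_self_of_isSymm hAB_symm,
    dotProduct_mulVec_self_of_isSymm hCD_symm]

end SymplecticBlocks

section Characteristics

variable {l : Type*} [Fintype l]

/-- The image of the zero characteristic under `[[A, B], [C, D]]`, which is the translation part
of the action on characteristics. -/
def characteristicShift (A B C D : Matrix l l (ZMod 2)) : (l → ZMod 2) × (l → ZMod 2) :=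
  (diag (Aᵀ * C), diag (Bᵀ * D))

/-- The affine action of `[[A, B], [C, D]]` on theta characteristics in arbitrary genus. The blocks
are taken over `ℤ/2`, where the action of an integral matrix is computed. -/
def characteristicAction (A B C D : Matrix l l (ZMod 2)) (p : (l → ZMod 2) × (l → ZMod 2)) :
    (l → ZMod 2) × (l → ZMod 2) :=
  blockVecMul A B C D p + characteristicShift A B C D

variable [DecidableEq l] {A B C D : Matrix l l (ZMod 2)}

theorem characteristicAction_bijective (h : fromBlocks A B C D ∈ symplecticGroup l (ZMod 2)) :
    Function.Bijective (characteristicAction A B C D) :=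
  Finite.injective_iff_bijective.1 <|
    (add_left_injective _).comp (Function.LeftInverse.injective (blockVecMul_symplectic_inv h))

theorem dotProduct_eq_dotProduct_blockVecMul_add
    (h : fromBlocks A B C D ∈ symplecticGroup l (ZMod 2)) (p : (l → ZMod 2) × (l → ZMod 2)) :
    p.1 ⬝ᵥ p.2 = (blockVecMul A B C D p).1 ⬝ᵥ (blockVecMul A B C D p).2 +
      (blockVecMul A B C D p).1 ⬝ᵥ (characteristicShift A B C D).2 +
      (blockVecMul A B C D p).2 ⬝ᵥ (characteristicShift A B C D).1 := by
  have sq (x : ZMod 2) : x ^ 2 = x := ZMod.pow_card x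
  have hquad := dotProduct_blockVecMul_of_mem_symplecticGroup (fromBlocks_symplectic_inv_mem h)
    (blockVecMul A B C D p)
  rw [blockVecMul_symplectic_inv h] at hquad
  obtain ⟨hAC, hBD, -⟩ := SymplecticGroup.fromBlocks_mem_iff.1 h
  simpa [sq, characteristicShift, dotProduct, hAC, hBD, mul_comm, ZModModule.neg_eq_self]
    using hquad

theorem dotProduct_characteristicAction
    (h : fromBlocks A B C D ∈ symplecticGroup l (ZMod 2)) (p : (l → ZMod 2) × (l → ZMod 2)) :
    (characteristicAction A B C D p).1 ⬝ᵥ (characteristicAction A B C D p).2 =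
      p.1 ⬝ᵥ p.2 + (characteristicShift A B C D).1 ⬝ᵥ (characteristicShift A B C D).2 := by
  rw [dotProduct_eq_dotProduct_blockVecMul_add h p, dotProduct_comm (blockVecMul A B C D p).2]
  simp only [characteristicAction, Prod.fst_add, Prod.snd_add, add_dotProduct, dotProduct_add]
  ring

end Characteristics

theorem symplectic_action_on_characteristics_general {l : Type*} [Fintype l]
    [DecidableEq l] {A B C D : Matrix l l (ZMod 2)}
    (h : fromBlocks A B C D ∈ symplecticGroup l (ZMod 2)) :
    Function.Bijective (characteristicAction A B C D) ∧
      Set.BijOn (characteristicAction A B C D) {p | p.1 ⬝ᵥ p.2 = 0} {p | p.1 ⬝ᵥ p.2 = 0} := by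
  have hbij := characteristicAction_bijective h
  have hshift := eq_zero_of_dotProduct_comp_eq_add hbij (dotProduct_characteristicAction h)
  have hpreimage :
      characteristicAction A B C D ⁻¹' {p | p.1 ⬝ᵥ p.2 = 0} = {p | p.1 ⬝ᵥ p.2 = 0} := by
    ext p
    simp [dotProduct_characteristicAction h, hshift]
  refine ⟨hbij, ?_⟩
  simpa only [hpreimage] using hbij.bijOn_preimage (t := {p | p.1 ⬝ᵥ p.2 = 0})

theorem alphaMap_eq_characteristicAction (A B C D : Matrix (Fin 2) (Fin 2) ℤ) :
    alphaMap A B C D = characteristicAction (A.map (Int.castRingHom (ZMod 2)))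
      (B.map (Int.castRingHom (ZMod 2))) (C.map (Int.castRingHom (ZMod 2)))
      (D.map (Int.castRingHom (ZMod 2))) := by
  ext p i <;>
    simp [alphaMap, characteristicAction, blockVecMul, characteristicShift, mulVec_transpose]

theorem evenChar_eq_setOf_dotProduct_eq_zero : evenChar = {p | p.1 ⬝ᵥ p.2 = 0} := by
  simp [evenChar, dotProduct, Fin.sum_univ_two]

/-- For `U = [[A,B],[C,D]] ∈ Sp₄(ℤ)`, the map `α_U` is a bijection of the set of theta
characteristics which maps the set of even characteristics bijectively onto itself. -/
theorem symplectic_action_on_characteristics (A B C D : Matrix (Fin 2) (Fin 2) ℤ)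
    (hU : Matrix.fromBlocks A B C D * Matrix.fromBlocks 0 1 (-1) 0 *
        (Matrix.fromBlocks A B C D)ᵀ = Matrix.fromBlocks 0 1 (-1) 0) :
    Function.Bijective (alphaMap A B C D) ∧
      Set.BijOn (alphaMap A B C D) evenChar evenChar := by
  rw [alphaMap_eq_characteristicAction, evenChar_eq_setOf_dotProduct_eq_zero]
  exact symplectic_action_on_characteristics_general
    (fromBlocks_map_mem_symplecticGroup _ (mem_symplecticGroup_iff_mul_neg_J.2 hU))
end

section
/- Let m ≥ 1, let Ω ⊆ ℂ^m be open, let F₂, …, F_{m+1} : Ω → ℂ be holomorphic, and let r₂, …, r_{m+1} ∈ ℂ. For s ∈ {1, …, m} let D_s denote the determinant of the m×m matrix whose first row is (r₂·F₂, …, r_{m+1}·F_{m+1}) and whose remaining m−1 rows are (∂F₂/∂z_t, …, ∂F_{m+1}/∂z_t) for t ranging over {1, …, m}∖{s} in increasing order. Then ∑_{s=1}^{m} (−1)^{s−1} · ∂D_s/∂z_s = (r₂ + ⋯ + r_{m+1}) · det(∂F_i/∂z_j)_{2 ≤ i ≤ m+1, 1 ≤ j ≤ m}, as holomorphic functions on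 Ω. -/
open scoped BigOperators

/-- The partial derivative `∂F/∂z_i` of a function `F : ℂ^m → ℂ`. -/
noncomputable def pd {m : ℕ} (i : Fin m) (F : (Fin m → ℂ) → ℂ) : (Fin m → ℂ) → ℂ :=
  fun z => fderiv ℂ F z (Pi.single i 1)

/-!
Laplace expansion moves the first row of `D_s` to the `s`-th row of the matrix `A` of derivatives
and absorbs the sign, so the left-hand side is `∑_s ∂_s det A_s`, where `A_s` is `A` with row `s`
replaced by `(r_j F_j)_j`. Differentiate each determinant row by row. The terms that differentiate
a row `t ≠ s` cancel in pairs `(s, t)`, `(t, s)`, because second derivatives are symmetric and the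
determinant is alternating (equivalently, the cofactor matrix of a Jacobian is divergence free).
The terms that differentiate row `s` replace it by row `s` of `A * diag(r)`, and
`∑_s det (A with row s replaced by row s of A * B) = tr(A B adj A) = tr(B) det A`.

The second derivatives exist because the derivative of a holomorphic function of several variables
in a fixed direction is a locally uniform limit of holomorphic difference quotients.
-/

section Holomorphic

open Filter Metric Set Topology
open scoped ContDiff

theorem mapsTo_closedBall_of_norm_le {α G : Type*} [SeminormedAddCommGroup G] {f : α → G}
    {s : Set α} {c : α} {M : ℝ} (hc : c ∈ s) (hM : ∀ x ∈ s, ‖f x‖ ≤ M) :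
    MapsTo f s (closedBall (f c) (2 * M)) := fun x hx => by
  rw [mem_closedBall_iff_norm, two_mul]
  exact norm_sub_le_of_le (hM x hx) (hM c hc)

variable {E F : Type*} [NormedAddCommGroup E] [NormedSpace ℂ E]
  [NormedAddCommGroup F] [NormedSpace ℂ F]

theorem norm_fderiv_le_of_forall_norm_le_ball {f : E → F} {c : E} {R M : ℝ} (hR : 0 < R)
    (hf : DifferentiableOn ℂ f (ball c R)) (hM : ∀ x ∈ ball c R, ‖f x‖ ≤ M) :
    ‖fderiv ℂ f c‖ ≤ 2 * M / R :=
  Complex.norm_fderiv_le_div_of_mapsTo_ball hf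
    (mapsTo_closedBall_of_norm_le (mem_ball_self hR) hM) hR

theorem norm_sub_sub_fderiv_le_of_mapsTo_ball {f : E → F} {c x : E} {R M : ℝ}
    (hf : DifferentiableOn ℂ f (ball c R)) (hM : MapsTo f (ball c R) (closedBall (f c) M))
    (hx : x ∈ ball c R) :
    ‖f x - f c - fderiv ℂ f c (x - c)‖ ≤ 2 * M * (‖x - c‖ / R) ^ 2 := by
  have hR : 0 < R := nonempty_ball.1 ⟨x, hx⟩
  have hc : DifferentiableAt ℂ f c := hf.differentiableAt (ball_mem_nhds c hR)
  set g : E → F := fun y => f y - fderiv ℂ f c (y - c) with hg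
  have hgc : g c = f c := by simp [hg]
  have hgd : DifferentiableOn ℂ g (ball c R) := by fun_prop
  have hgmaps : MapsTo g (ball c R) (closedBall (g c) (2 * M)) := fun y hy => by
    have hlin : ‖fderiv ℂ f c (y - c)‖ ≤ M := calc
      ‖fderiv ℂ f c (y - c)‖ ≤ M / R * R := ContinuousLinearMap.le_of_opNorm_le_of_le _
        (Complex.norm_fderiv_le_div_of_mapsTo_ball hf hM hR) (mem_ball_iff_norm.1 hy).le
      _ = M := div_mul_cancel₀ M hR.ne'
    rw [mem_closedBall_iff_norm, hgc, hg, sub_right_comm, two_mul]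
    exact norm_sub_le_of_le (mem_closedBall_iff_norm.1 (hM hy)) hlin
  have hgo : (g · - g c) =o[𝓝 c] fun y => ‖y - c‖ ^ 1 := by
    refine hc.hasFDerivAt.isLittleO.norm_right.congr (fun y => ?_) fun y => (pow_one _).symm
    rw [hgc, hg, sub_right_comm]
  have := Complex.dist_le_mul_div_pow_of_mapsTo_ball_of_isLittleO hgd hgmaps hgo hx
  rwa [dist_eq_norm, dist_eq_norm, hgc, hg, sub_right_comm] at this

theorem uniformCauchySeqOn_fderiv {ι : Type*} {l : Filter ι} {f : ι → E → F} {c : E} {r R : ℝ}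
    (hrR : r < R) (hf : ∀ᶠ i in l, DifferentiableOn ℂ (f i) (ball c R))
    (hcauchy : UniformCauchySeqOn f l (ball c R)) :
    UniformCauchySeqOn (fun i => fderiv ℂ (f i)) l (ball c r) := by
  have hgap : 0 < R - r := sub_pos.2 hrR
  intro u hu
  obtain ⟨ε, hε, hεu⟩ := mem_uniformity_dist.1 hu
  set δ : ℝ := ε * (R - r) / 4 with hδ
  have hclose := hcauchy _ (dist_mem_uniformity (show 0 < δ by positivity))
  filter_upwards [hclose, hf.prod_mk hf] with ⟨i, j⟩ hij ⟨hi, hj⟩ x hx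
  apply hεu
  have hsub : ball x (R - r) ⊆ ball c R := ball_subset_ball' (by linarith [mem_ball.1 hx])
  have hxR : ball c R ∈ 𝓝 x := isOpen_ball.mem_nhds (ball_subset_ball hrR.le hx)
  calc dist (fderiv ℂ (f i) x) (fderiv ℂ (f j) x)
      = ‖fderiv ℂ (f i - f j) x‖ := by
        rw [dist_eq_norm, fderiv_sub (hi.differentiableAt hxR) (hj.differentiableAt hxR)]
    _ ≤ 2 * δ / (R - r) := norm_fderiv_le_of_forall_norm_le_ball hgap ((hi.sub hj).mono hsub)
        fun y hy => (dist_eq_norm (f i y) (f j y) ▸ hij y (hsub hy)).le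
    _ = ε / 2 := by rw [hδ]; field_simp; ring
    _ < ε := half_lt_self hε

theorem tendstoUniformlyOn_inv_smul_sub {f : E → F} {c : E} {r R M : ℝ} (hrR : r < R)
    (hf : DifferentiableOn ℂ f (ball c R)) (hM : ∀ x ∈ ball c R, ‖f x‖ ≤ M) (v : E) :
    TendstoUniformlyOn (fun (t : ℂ) x => t⁻¹ • (f (x + t • v) - f x)) (fun x => fderiv ℂ f x v)
      (𝓝[≠] 0) (ball c r) := by
  have hgap : 0 < R - r := sub_pos.2 hrR
  have hbound : ∀ t : ℂ, t ≠ 0 → ‖t • v‖ < R - r → ∀ x ∈ ball c r,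
      dist (fderiv ℂ f x v) (t⁻¹ • (f (x + t • v) - f x)) ≤
        4 * M * (‖v‖ / (R - r)) ^ 2 * ‖t‖ := by
    intro t ht htv x hx
    have hsub : ball x (R - r) ⊆ ball c R := ball_subset_ball' (by linarith [mem_ball.1 hx])
    have hTaylor := norm_sub_sub_fderiv_le_of_mapsTo_ball (x := x + t • v) (hf.mono hsub)
      (mapsTo_closedBall_of_norm_le (mem_ball_self hgap) fun y hy => hM y (hsub hy))
      (by simpa using htv)
    rw [add_sub_cancel_left, map_smul, norm_smul] at hTaylor
    calc dist (fderiv ℂ f x v) (t⁻¹ • (f (x + t • v) - f x))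
        = ‖t‖⁻¹ * ‖f (x + t • v) - f x - t • fderiv ℂ f x v‖ := by
          rw [dist_comm, dist_eq_norm, ← norm_inv, ← norm_smul, smul_sub _ _ (t • _),
            inv_smul_smul₀ ht]
      _ ≤ ‖t‖⁻¹ * (2 * (2 * M) * (‖t‖ * ‖v‖ / (R - r)) ^ 2) := by gcongr
      _ = 4 * M * (‖v‖ / (R - r)) ^ 2 * ‖t‖ := by field_simp; ring
  have hsmall : ∀ᶠ t : ℂ in 𝓝[≠] 0, ‖t • v‖ < R - r := by
    refine nhdsWithin_le_nhds (Tendsto.eventually_lt_const hgap ?_)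
    exact (by fun_prop : Continuous fun t : ℂ => ‖t • v‖).tendsto' 0 0 (by simp)
  have hbound_tendsto :
      Tendsto (fun t : ℂ => 4 * M * (‖v‖ / (R - r)) ^ 2 * ‖t‖) (𝓝[≠] 0) (𝓝 0) :=
    tendsto_nhdsWithin_of_tendsto_nhds (Continuous.tendsto' (by fun_prop) 0 0 (by simp))
  refine Metric.tendstoUniformlyOn_iff.2 fun ε hε => ?_
  filter_upwards [self_mem_nhdsWithin, hsmall, hbound_tendsto.eventually_lt_const hε]
    with t ht htv hlt x hx using (hbound t ht htv x hx).trans_lt hlt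

variable [CompleteSpace F]

theorem differentiableOn_of_tendstoUniformlyOn {ι : Type*} {l : Filter ι} [l.NeBot]
    {f : ι → E → F} {g : E → F} {U : Set E} (hU : IsOpen U)
    (hf : ∀ᶠ i in l, DifferentiableOn ℂ (f i) U) (hfg : TendstoUniformlyOn f g l U) :
    DifferentiableOn ℂ g U := by
  intro c hc
  obtain ⟨R, hR, hRU⟩ := isOpen_iff.1 hU c hc
  have hmem : ball c (R / 2) ∈ 𝓝 c := ball_mem_nhds c (half_pos hR)
  have hcauchy : UniformCauchySeqOn (fun i => fderiv ℂ (f i)) l (ball c (R / 2)) :=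
    uniformCauchySeqOn_fderiv (half_lt_self hR) (hf.mono fun i hi => hi.mono hRU)
      (hfg.mono hRU).uniformCauchySeqOn
  have hlim : ∀ x ∈ ball c (R / 2), ∃ L, Tendsto (fun i => fderiv ℂ (f i) x) l (𝓝 L) :=
    fun x hx => CompleteSpace.complete (hcauchy.cauchy_map hx)
  choose! g' hg' using hlim
  refine (hasFDerivAt_of_tendstoUniformlyOnFilter (f := f) (g' := g')
    ((hcauchy.tendstoUniformlyOn_of_tendsto hg').tendstoUniformlyOnFilter.mono_right
      (le_principal_iff.2 hmem)) ?_ ?_).differentiableAt.differentiableWithinAt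
  · filter_upwards [hf.prod_mk (hU.mem_nhds hc)] with ⟨i, x⟩ ⟨hi, hx⟩
    exact (hi.differentiableAt (hU.mem_nhds hx)).hasFDerivAt
  · filter_upwards [hU.mem_nhds hc] with x hx using hfg.tendsto_at hx

theorem differentiableAt_fderiv_apply {f : E → F} {c : E}
    (hf : ∀ᶠ x in 𝓝 c, DifferentiableAt ℂ f x) (v : E) :
    DifferentiableAt ℂ (fun x => fderiv ℂ f x v) c := by
  have hbdd : ∀ᶠ x in 𝓝 c, ‖f x‖ < ‖f c‖ + 1 :=
    hf.self_of_nhds.continuousAt.norm.eventually_lt_const (lt_add_one _)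
  obtain ⟨R, hR, hball⟩ := eventually_nhds_iff_ball.1 (hf.and hbdd)
  have hfR : DifferentiableOn ℂ f (ball c R) :=
    fun x hx => (hball x hx).1.differentiableWithinAt
  have hquot : ∀ᶠ t : ℂ in 𝓝[≠] 0,
      DifferentiableOn ℂ (fun x => t⁻¹ • (f (x + t • v) - f x)) (ball c (R / 2)) := by
    have hsmall : ∀ᶠ t : ℂ in 𝓝 0, ‖t • v‖ < R / 2 := by
      refine Tendsto.eventually_lt_const (half_pos hR) ?_
      exact Continuous.tendsto' (by fun_prop) 0 0 (by simp)
    filter_upwards [nhdsWithin_le_nhds hsmall] with t ht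
    have htranslate : MapsTo (· + t • v) (ball c (R / 2)) (ball c R) := fun x hx => by
      rw [mem_ball_iff_norm] at hx ⊢
      rw [add_sub_right_comm]
      linarith [norm_add_le (x - c) (t • v)]
    exact ((hfR.comp (by fun_prop) htranslate).sub
      (hfR.mono (ball_subset_ball (half_le_self hR.le)))).const_smul _
  exact (differentiableOn_of_tendstoUniformlyOn isOpen_ball hquot
    (tendstoUniformlyOn_inv_smul_sub (half_lt_self hR) hfR
      (fun x hx => (hball x hx).2.le) v)).differentiableAt (ball_mem_nhds c (half_pos hR))

theorem contDiffOn_of_differentiableOn_of_isOpen [FiniteDimensional ℂ E] {f : E → F} {U : Set E}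
    (hU : IsOpen U) (hf : DifferentiableOn ℂ f U) : ContDiffOn ℂ ∞ f U := by
  rw [contDiffOn_infty]
  intro n
  induction n generalizing f with
  | zero => exact contDiffOn_zero.2 hf.continuousOn
  | succ n ih =>
    refine contDiffOn_succ_of_fderiv_apply hf (by simp) fun v => ih fun x hx => ?_
    have hnhds : ∀ᶠ y in 𝓝 x, DifferentiableAt ℂ f y :=
      (hU.eventually_mem hx).mono fun y hy => hf.differentiableAt (hU.mem_nhds hy)
    exact (differentiableAt_fderiv_apply hnhds v).differentiableWithinAt.congr
      (fun y hy => by rw [fderivWithin_of_isOpen hU hy]) (by rw [fderivWithin_of_isOpen hU hx])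

end Holomorphic

section Determinant

open Finset

variable {n R : Type*} [Fintype n] [DecidableEq n] [CommRing R]

theorem det_updateRow_updateRow_swap (A : Matrix n n R) {s t : n} (hst : s ≠ t) (b c : n → R) :
    ((A.updateRow s b).updateRow t c).det = -((A.updateRow t b).updateRow s c).det := by
  have hswap : ((A.updateRow t b).updateRow s c).submatrix (Equiv.swap s t) id =
      (A.updateRow s b).updateRow t c := by
    ext i j
    simp only [Matrix.submatrix_apply, Matrix.updateRow_apply, Equiv.swap_apply_def, id]
    grind
  rw [← hswap, Matrix.det_permute, Equiv.Perm.sign_swap hst]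
  simp

theorem sum_sum_erase_det_updateRow_updateRow (A : Matrix n n R) (b : n → R)
    {H : n → n → n → R} (hH : ∀ s t, H s t = H t s) :
    ∑ s, ∑ t ∈ univ.erase s, ((A.updateRow s b).updateRow t (H s t)).det = 0 := by
  rw [sum_sigma']
  refine sum_involution (fun p _ => ⟨p.2, p.1⟩) ?_ ?_ ?_ ?_
  · rintro ⟨s, t⟩ hst
    have hts : t ≠ s := by simpa using hst
    rw [det_updateRow_updateRow_swap A hts.symm, hH s t, neg_add_cancel]
  · rintro ⟨s, t⟩ hst - hfixed
    exact ne_of_mem_erase (mem_sigma.1 hst).2 (congrArg Sigma.fst hfixed)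
  · rintro ⟨s, t⟩ hst
    simpa [eq_comm] using hst
  · simp

theorem sum_det_updateRow_mul (A B : Matrix n n R) :
    ∑ s, (A.updateRow s ((A * B).row s)).det = B.trace * A.det := by
  have hcramer : ∀ s, (A.updateRow s ((A * B).row s)).det = (A * B * A.adjugate) s s := by
    intro s
    rw [← Matrix.cramer_transpose_apply, Matrix.cramer_eq_adjugate_mulVec,
      ← Matrix.adjugate_transpose, Matrix.mulVec_transpose]
    rfl
  calc ∑ s, (A.updateRow s ((A * B).row s)).det
      = (A * B * A.adjugate).trace := sum_congr rfl fun s _ => hcramer s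
    _ = (A.adjugate * A * B).trace := Matrix.trace_mul_cycle A B A.adjugate
    _ = B.trace * A.det := by
      rw [Matrix.adjugate_mul, Matrix.smul_mul, Matrix.one_mul, Matrix.trace_smul, smul_eq_mul,
        mul_comm]

theorem neg_one_pow_mul_det_cons_succAbove {m : ℕ} (A : Matrix (Fin (m + 1)) (Fin (m + 1)) R)
    (b : Fin (m + 1) → R) (s : Fin (m + 1)) :
    (-1) ^ (s : ℕ) * (Matrix.of (Fin.cons b fun t => A (s.succAbove t))).det =
      (A.updateRow s b).det := by
  rw [Matrix.det_succ_row_zero, Matrix.det_succ_row _ s, mul_sum]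
  refine sum_congr rfl fun j _ => ?_
  rw [Matrix.updateRow_self, Matrix.submatrix_updateRow_succAbove, pow_add, mul_assoc,
    mul_assoc, mul_assoc]
  rfl

end Determinant

section Derivative

open Finset

variable {𝕜 E ι κ : Type*} [NontriviallyNormedField 𝕜] [NormedAddCommGroup E] [NormedSpace 𝕜 E]

theorem fderiv_fderiv_apply_comm {F : Type*} [NormedAddCommGroup F] [NormedSpace 𝕜 F]
    {f : E → F} {z : E} (hf : ContDiffAt 𝕜 (minSmoothness 𝕜 2) f z) (u v : E) :
    fderiv 𝕜 (fun w => fderiv 𝕜 f w v) z u = fderiv 𝕜 (fun w => fderiv 𝕜 f w u) z v := by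
  have hdiff : DifferentiableAt 𝕜 (fderiv 𝕜 f) z :=
    (hf.fderiv_right (m := 1) le_minSmoothness).differentiableAt one_ne_zero
  have happly : ∀ a b, fderiv 𝕜 (fun w => fderiv 𝕜 f w b) z a = fderiv 𝕜 (fderiv 𝕜 f) z a b := by
    intro a b
    simp [fderiv_clm_apply hdiff (differentiableAt_const b)]
  rw [happly, happly]
  exact hf.isSymmSndFDerivAt le_rfl u v

/-- The matrix of directional derivatives `∂G_j/∂e_i` at `w`, with one row per direction `e_i` and
one column per function `G_j`: the transpose of the Jacobian matrix when the `e_i` are the standard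
basis vectors. -/
noncomputable def directionalDerivMatrix (e : ι → E) (G : κ → E → 𝕜) (w : E) :
    Matrix ι κ 𝕜 :=
  Matrix.of fun i j => fderiv 𝕜 (G j) w (e i)

theorem differentiableAt_directionalDerivMatrix (e : ι → E) {G : κ → E → 𝕜} {z : E}
    (hG : ∀ j, ContDiffAt 𝕜 2 (G j) z) (i : ι) (j : κ) :
    DifferentiableAt 𝕜 (fun w => directionalDerivMatrix e G w i j) z :=
  (((hG j).fderiv_right (m := 1) le_rfl).differentiableAt one_ne_zero).clm_apply
    (differentiableAt_const _)

variable [Fintype ι] [DecidableEq ι] {G h : ι → E → 𝕜} {z : E}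

theorem fderiv_det {M : E → Matrix ι ι 𝕜}
    (hM : ∀ i j, DifferentiableAt 𝕜 (fun w => M w i j) z) (v : E) :
    fderiv 𝕜 (fun w => (M w).det) z v =
      ∑ i, ((M z).updateRow i fun j => fderiv 𝕜 (fun w => M w i j) z v).det := by
  let det : ContinuousMultilinearMap 𝕜 (fun _ : ι => ι → 𝕜) 𝕜 :=
    { (Matrix.detRowAlternating (n := ι) (R := 𝕜)).toMultilinearMap with
      cont := Continuous.matrix_det (A := fun A : Matrix ι ι 𝕜 => A) continuous_id }
  have hdet : HasFDerivAt (fun w => (M w).det) _ z :=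
    HasFDerivAt.multilinear_comp det (g := fun i w => M w i) fun i =>
      hasFDerivAt_pi.2 fun j => (hM i j).hasFDerivAt
  rw [hdet.fderiv, _root_.sum_apply]
  rfl

theorem fderiv_det_updateRow {M : E → Matrix ι ι 𝕜}
    (hM : ∀ i j, DifferentiableAt 𝕜 (fun w => M w i j) z)
    (hh : ∀ j, DifferentiableAt 𝕜 (h j) z) (s : ι) (v : E) :
    fderiv 𝕜 (fun w => ((M w).updateRow s fun j => h j w).det) z v =
      ((M z).updateRow s fun j => fderiv 𝕜 (h j) z v).det +
        ∑ t ∈ univ.erase s, (((M z).updateRow s fun j => h j z).updateRow t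
          fun j => fderiv 𝕜 (fun w => M w t j) z v).det := by
  have hentries : ∀ i j,
      DifferentiableAt 𝕜 (fun w => (M w).updateRow s (fun j => h j w) i j) z := by
    intro i j
    rcases eq_or_ne i s with rfl | his
    · simpa only [Matrix.updateRow_self] using hh j
    · simpa only [Matrix.updateRow_ne his] using hM i j
  rw [fderiv_det hentries, ← add_sum_erase _ _ (mem_univ s)]
  simp only [Matrix.updateRow_self, Matrix.updateRow_idem]
  congr 1
  refine sum_congr rfl fun t ht => ?_
  simp only [Matrix.updateRow_ne (ne_of_mem_erase ht)]

theorem sum_fderiv_det_updateRow_directionalDerivMatrix (e : ι → E)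
    (hG : ∀ j, ContDiffAt 𝕜 (minSmoothness 𝕜 2) (G j) z)
    (hh : ∀ j, DifferentiableAt 𝕜 (h j) z) :
    ∑ s, fderiv 𝕜 (fun w => ((directionalDerivMatrix e G w).updateRow s fun j => h j w).det) z
        (e s) =
      ∑ s, ((directionalDerivMatrix e G z).updateRow s fun j => fderiv 𝕜 (h j) z (e s)).det := by
  have hentries := differentiableAt_directionalDerivMatrix e
    fun j => (hG j).of_le le_minSmoothness
  have hsymm : ∀ s t, (fun j => fderiv 𝕜 (fun w => directionalDerivMatrix e G w t j) z (e s)) =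
      fun j => fderiv 𝕜 (fun w => directionalDerivMatrix e G w s j) z (e t) :=
    fun s t => funext fun j => fderiv_fderiv_apply_comm (hG j) (e s) (e t)
  simp only [fderiv_det_updateRow hentries hh, sum_add_distrib]
  rw [sum_sum_erase_det_updateRow_updateRow _ _ hsymm, add_zero]

end Derivative

theorem determinant_derivative_identity_general {𝕜 E : Type*} [NontriviallyNormedField 𝕜]
    [NormedAddCommGroup E] [NormedSpace 𝕜 E] {n : ℕ} {G : Fin (n + 1) → E → 𝕜} {z : E}
    (hG : ∀ j, ContDiffAt 𝕜 (minSmoothness 𝕜 2) (G j) z) (r : Fin (n + 1) → 𝕜)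
    (e : Fin (n + 1) → E) :
    (∑ s : Fin (n + 1), (-1 : 𝕜) ^ (s : ℕ) *
      fderiv 𝕜 (fun w =>
        (Matrix.of (Fin.cons (fun j => r j * G j w)
          (fun t j => fderiv 𝕜 (G j) w (e (s.succAbove t))))).det) z (e s))
      = (∑ j, r j) * (Matrix.of fun i j => fderiv 𝕜 (G i) z (e j)).det := by
  set A : E → Matrix (Fin (n + 1)) (Fin (n + 1)) 𝕜 := directionalDerivMatrix e G with hA
  have hGz : ∀ j, DifferentiableAt 𝕜 (G j) z := fun j =>
    ((hG j).of_le le_minSmoothness).differentiableAt two_ne_zero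
  have hrow : ∀ s, (fun j => fderiv 𝕜 (fun w => r j * G j w) z (e s)) =
      (A z * Matrix.diagonal r).row s := by
    intro s
    ext j
    rw [fderiv_const_mul (hGz j), Matrix.row_apply, Matrix.mul_diagonal]
    exact mul_comm _ _
  let D : Fin (n + 1) → E → 𝕜 := fun s w =>
    (Matrix.of (Fin.cons (fun j => r j * G j w) fun t => A w (s.succAbove t))).det
  have hexpand : ∀ (s : Fin (n + 1)) (w : E), (-1 : 𝕜) ^ (s : ℕ) * D s w =
      ((A w).updateRow s fun j => r j * G j w).det :=
    fun s w => neg_one_pow_mul_det_cons_succAbove (A w) _ s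
  calc _ = ∑ s : Fin (n + 1), (-1 : 𝕜) ^ (s : ℕ) * fderiv 𝕜 (D s) z (e s) := rfl
    _ = ∑ s, fderiv 𝕜 (fun w => ((A w).updateRow s fun j => r j * G j w).det) z (e s) := by
        refine Finset.sum_congr rfl fun s _ => ?_
        have hsmul : fderiv 𝕜 (fun w => (-1 : 𝕜) ^ (s : ℕ) * D s w) z =
            (-1 : 𝕜) ^ (s : ℕ) • fderiv 𝕜 (D s) z :=
          congrFun (fderiv_const_smul_field ((-1 : 𝕜) ^ (s : ℕ))) z
        simp only [← hexpand, hsmul, _root_.smul_apply, smul_eq_mul]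
    _ = ∑ s, ((A z).updateRow s ((A z * Matrix.diagonal r).row s)).det := by
        rw [sum_fderiv_det_updateRow_directionalDerivMatrix e hG fun j => (hGz j).const_mul (r j)]
        simp only [hrow, hA]
    _ = (∑ j, r j) * (A z).det := by rw [sum_det_updateRow_mul, Matrix.trace_diagonal]
    _ = (∑ j, r j) * (Matrix.of fun i j => fderiv 𝕜 (G i) z (e j)).det := by
        rw [← Matrix.det_transpose]
        rfl

/-- The determinantal identity behind the multilinear Rankin brackets: for holomorphic
functions `F₂, …, F_{m+1}` (here `G 0, …, G n` with `m = n + 1`) on an open `Ω ⊆ ℂ^m`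
and weights `r₂, …, r_{m+1}`, with `D_s` the determinant of the matrix whose first row is
`(r_j F_j)_j` and whose other rows are the gradients in the directions `t ≠ s`,
`∑_s (−1)^{s−1} ∂D_s/∂z_s = (r₂ + ⋯ + r_{m+1}) · det(∂F_i/∂z_j)`. -/
theorem determinant_derivative_identity (n : ℕ) (Ω : Set (Fin (n + 1) → ℂ))
    (hΩ : IsOpen Ω) (G : Fin (n + 1) → ((Fin (n + 1) → ℂ) → ℂ))
    (hG : ∀ j, DifferentiableOn ℂ (G j) Ω) (r : Fin (n + 1) → ℂ) :
    ∀ z ∈ Ω,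
      (∑ s : Fin (n + 1), (-1 : ℂ) ^ (s : ℕ) *
        pd s (fun w =>
          (Matrix.of (Fin.cons (fun j => r j * G j w)
            (fun t j => pd (s.succAbove t) (G j) w))).det) z)
        = (∑ j, r j) * (Matrix.of fun i j => pd j (G i) z).det := by
  intro z hz
  have hC2 : ∀ j, ContDiffAt ℂ (minSmoothness ℂ 2) (G j) z := fun j =>
    ((contDiffOn_of_differentiableOn_of_isOpen hΩ (hG j)).contDiffAt (hΩ.mem_nhds hz)).of_le
      (by simpa using ENat.LEInfty.out)
  exact determinant_derivative_identity_general hC2 r fun i => Pi.single i 1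
end
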